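/- Let A and B be commutative rings, let R be a commutative ring equipped with ring homomorphisms f : A → R and g : B → R, let M be an A-module and N a B-module. View A ⊗_ℤ B as a commutative ring and R as an (A ⊗_ℤ B)-algebra via a ⊗ b ↦ f(a)g(b), and give M ⊗_ℤ N its natural (A ⊗_ℤ B)-module structure ((a ⊗ b) · (m ⊗ n) = (a·m) ⊗ (b·n)). Then there is an isomorphism of R-modules R ⊗_{A ⊗_ℤ B} (M ⊗_ℤ N) ≅ (R ⊗_A M) ⊗_R (R ⊗_B N). -/

import Mathlib

open scoped TensorProduct

theorem exists_liftBC {A R M P : Type*} [CommSemiring A] [CommSemiring R] [Algebra A R]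
    [AddCommMonoid M] [Module A M] [AddCommMonoid P] [Module R P]
    (l : M →+ P) (h : ∀ (a : A) (m : M), l (a • m) = algebraMap A R a • l m) :
    ∃ F : (R ⊗[A] M) →ₗ[R] P, ∀ (r : R) (m : M), F (r ⊗ₜ[A] m) = r • l m := by
  let : Module A P := Module.compHom P (algebraMap A R)
  have : IsScalarTower A R P := ⟨fun a r p => by
    rw [Algebra.smul_def, mul_smul]; rfl⟩
  let l' : M →ₗ[A] P := { l with map_smul' := fun a m => h a m }
  exact ⟨l'.liftBaseChange R, fun r m => by simp [l']⟩

theorem ext_bc {A R M P : Type*} [CommSemiring A] [CommSemiring R] [Algebra A R]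
    [AddCommMonoid M] [Module A M] [AddCommMonoid P] [Module R P]
    {F G : (R ⊗[A] M) →ₗ[R] P} (h : ∀ m : M, F (1 ⊗ₜ[A] m) = G (1 ⊗ₜ[A] m)) : F = G := by
  ext x
  induction x using TensorProduct.induction_on with
  | zero => simp
  | add x y hx hy => simp [hx, hy]
  | tmul r m =>
    have : r ⊗ₜ[A] m = r • ((1 : R) ⊗ₜ[A] m) := by simp [TensorProduct.smul_tmul']
    rw [this, map_smul, map_smul, h]

noncomputable def liftBC {A R M P : Type*} [CommSemiring A] [CommSemiring R] [Algebra A R]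
    [AddCommMonoid M] [Module A M] [AddCommMonoid P] [Module R P]
    (l : M →+ P) (h : ∀ (a : A) (m : M), l (a • m) = algebraMap A R a • l m) :
    (R ⊗[A] M) →ₗ[R] P := (exists_liftBC l h).choose

theorem liftBC_tmul {A R M P : Type*} [CommSemiring A] [CommSemiring R] [Algebra A R]
    [AddCommMonoid M] [Module A M] [AddCommMonoid P] [Module R P]
    (l : M →+ P) (h : ∀ (a : A) (m : M), l (a • m) = algebraMap A R a • l m) (r : R) (m : M) :
    liftBC l h (r ⊗ₜ[A] m) = r • l m := (exists_liftBC l h).choose_spec r m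

theorem one_tmul_smul {A R M : Type*} [CommSemiring A] [CommSemiring R] [Algebra A R]
    [AddCommMonoid M] [Module A M] (a : A) (m : M) :
    (1 : R) ⊗ₜ[A] (a • m) = algebraMap A R a • ((1 : R) ⊗ₜ[A] m) := by
  rw [← TensorProduct.smul_tmul, TensorProduct.smul_tmul', Algebra.smul_def, smul_eq_mul]

/-- For commutative rings `A`, `B`, a commutative ring `R` with ring maps `f : A → R`,
`g : B → R`, an `A`-module `M` and a `B`-module `N`, viewing `R` as an `(A ⊗[ℤ] B)`-algebra via
`a ⊗ b ↦ f(a)g(b)` and `M ⊗[ℤ] N` as an `(A ⊗[ℤ] B)`-module via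
`(a ⊗ b) • (m ⊗ n) = (a • m) ⊗ (b • n)`, there is an isomorphism of `R`-modules
`R ⊗[A ⊗[ℤ] B] (M ⊗[ℤ] N) ≅ (R ⊗[A] M) ⊗[R] (R ⊗[B] N)`. -/
theorem baseChange_tensor_iso_tensor_of_baseChanges
    {A B R : Type*} [CommRing A] [CommRing B] [CommRing R]
    (f : A →+* R) (g : B →+* R)
    (M : Type*) [AddCommGroup M] [Module A M]
    (N : Type*) [AddCommGroup N] [Module B N]
    [Algebra A R] (hA : algebraMap A R = f)
    [Algebra B R] (hB : algebraMap B R = g)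
    [Algebra (A ⊗[ℤ] B) R]
    (hAB : ∀ (a : A) (b : B), algebraMap (A ⊗[ℤ] B) R (a ⊗ₜ[ℤ] b) = f a * g b)
    [Module (A ⊗[ℤ] B) (M ⊗[ℤ] N)]
    (hMN : ∀ (a : A) (b : B) (m : M) (n : N),
      (a ⊗ₜ[ℤ] b) • (m ⊗ₜ[ℤ] n) = (a • m) ⊗ₜ[ℤ] (b • n)) :
    Nonempty ((R ⊗[A ⊗[ℤ] B] (M ⊗[ℤ] N)) ≃ₗ[R] ((R ⊗[A] M) ⊗[R] (R ⊗[B] N))) := by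
  subst hA hB
  -- forward map
  let u : M →ₗ[ℤ] (R ⊗[A] M) := (AddMonoidHom.mk' (fun m => (1 : R) ⊗ₜ[A] m)
    (fun x y => TensorProduct.tmul_add _ _ _)).toIntLinearMap
  let v : N →ₗ[ℤ] (R ⊗[B] N) := (AddMonoidHom.mk' (fun m => (1 : R) ⊗ₜ[B] m)
    (fun x y => TensorProduct.tmul_add _ _ _)).toIntLinearMap
  let w : M →+ N →+ ((R ⊗[A] M) ⊗[R] (R ⊗[B] N)) :=
    AddMonoidHom.mk' (fun m => AddMonoidHom.mk' (fun n => (u m) ⊗ₜ[R] (v n))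
      (fun x y => by rw [map_add, TensorProduct.tmul_add]))
      (fun x y => by ext n; simp [TensorProduct.add_tmul])
  let φ : (M ⊗[ℤ] N) →+ ((R ⊗[A] M) ⊗[R] (R ⊗[B] N)) :=
    TensorProduct.liftAddHom w (fun r m n => by
      rw [map_zsmul (w m)]
      exact map_zsmul (w.flip n) r m)
  have hφ : ∀ m n, φ (m ⊗ₜ n) = ((1 : R) ⊗ₜ[A] m) ⊗ₜ[R] ((1 : R) ⊗ₜ[B] n) := fun m n => rfl
  have hφs : ∀ (s : A ⊗[ℤ] B) (x : M ⊗[ℤ] N),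
      φ (s • x) = algebraMap (A ⊗[ℤ] B) R s • φ x := by
    intro s x
    induction s using TensorProduct.induction_on with
    | zero =>
      refine ((congrArg φ (zero_smul (A ⊗[ℤ] B) x)).trans (map_zero φ)).trans ?_
      exact ((congrArg (fun t => t • φ x) (map_zero (algebraMap (A ⊗[ℤ] B) R))).trans
        (zero_smul R (φ x))).symm
    | add s t hs ht => rw [add_smul, map_add, map_add, add_smul, hs, ht]
    | tmul a b =>
      induction x using TensorProduct.induction_on with
      | zero => rw [smul_zero, map_zero, smul_zero]
      | add x y hx hy => rw [smul_add, map_add, map_add, smul_add, hx, hy]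
      | tmul m n =>
        rw [hMN, hφ, hφ, hAB, one_tmul_smul, one_tmul_smul, TensorProduct.tmul_smul,
          ← TensorProduct.smul_tmul', smul_smul, mul_comm]
  let F := liftBC φ hφs
  have hF : ∀ m n, F (1 ⊗ₜ (m ⊗ₜ n)) = ((1 : R) ⊗ₜ[A] m) ⊗ₜ[R] ((1 : R) ⊗ₜ[B] n) :=
    fun m n => by rw [liftBC_tmul, one_smul, hφ]
  -- backward map
  have key : ∀ (a : A) (b : B) (m : M) (n : N),
      (1 : R) ⊗ₜ[A ⊗[ℤ] B] ((a • m) ⊗ₜ[ℤ] (b • n)) =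
        (algebraMap A R a * algebraMap B R b) • ((1 : R) ⊗ₜ[A ⊗[ℤ] B] (m ⊗ₜ[ℤ] n)) := by
    intro a b m n
    rw [← hMN, one_tmul_smul, hAB]
  let ψ₁ : M → (R ⊗[B] N) →ₗ[R] (R ⊗[A ⊗[ℤ] B] (M ⊗[ℤ] N)) := fun m =>
    liftBC (AddMonoidHom.mk' (fun n => (1 : R) ⊗ₜ[A ⊗[ℤ] B] (m ⊗ₜ[ℤ] n))
      (fun x y => by rw [TensorProduct.tmul_add, TensorProduct.tmul_add]))
      (fun b n => by simpa using key 1 b m n)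
  have hψ₁ : ∀ m n, ψ₁ m (1 ⊗ₜ n) = (1 : R) ⊗ₜ[A ⊗[ℤ] B] (m ⊗ₜ[ℤ] n) := fun m n => by
    simp only [ψ₁]
    rw [liftBC_tmul, one_smul]; rfl
  let ψ₂ : (R ⊗[A] M) →ₗ[R] (R ⊗[B] N) →ₗ[R] (R ⊗[A ⊗[ℤ] B] (M ⊗[ℤ] N)) :=
    liftBC (AddMonoidHom.mk' ψ₁ (fun x y => by
        apply ext_bc
        intro n
        rw [LinearMap.add_apply, hψ₁, hψ₁, hψ₁, TensorProduct.add_tmul, TensorProduct.tmul_add]))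
      (fun a m => by
        apply ext_bc
        intro n
        rw [LinearMap.smul_apply]
        change ψ₁ (a • m) (1 ⊗ₜ n) = algebraMap A R a • ψ₁ m (1 ⊗ₜ n)
        rw [hψ₁, hψ₁]
        simpa using key a 1 m n)
  have hψ₂ : ∀ m n, ψ₂ (1 ⊗ₜ m) (1 ⊗ₜ n) = (1 : R) ⊗ₜ[A ⊗[ℤ] B] (m ⊗ₜ[ℤ] n) := fun m n => by
    simp only [ψ₂]
    rw [liftBC_tmul, one_smul, AddMonoidHom.mk'_apply, hψ₁]
  let G := TensorProduct.lift ψ₂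
  have hG : ∀ m n, G ((1 ⊗ₜ m) ⊗ₜ (1 ⊗ₜ n)) = (1 : R) ⊗ₜ[A ⊗[ℤ] B] (m ⊗ₜ[ℤ] n) :=
    fun m n => by rw [TensorProduct.lift.tmul, hψ₂]
  refine ⟨LinearEquiv.ofLinearMap F G ?_ ?_⟩
  · apply TensorProduct.ext
    apply ext_bc
    intro m
    apply ext_bc
    intro n
    change F (G ((1 ⊗ₜ m) ⊗ₜ (1 ⊗ₜ n))) = _
    rw [hG, hF]
    rfl
  · apply ext_bc
    intro x
    change G (F _) = _
    rw [LinearMap.id_apply]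
    induction x using TensorProduct.induction_on with
    | zero => rw [TensorProduct.tmul_zero, map_zero, map_zero]
    | add x y hx hy => rw [TensorProduct.tmul_add, map_add, map_add, hx, hy]
    | tmul m n => rw [hF, hG]
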